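/- Let α ∈ (0,1) and ρ ∈ (0,1) with ρ̂ := 1 - ρ. Then ∫₀¹ u^{-α} (1-u)^{αρ̂-1} (1+u)^{αρ-1} du = 2^{α-1} Γ(αρ̂) Γ(1-α) / Γ(1-αρ). -/

import Mathlib

open MeasureTheory Real Set

/-!
For `c > -1` the Möbius map `v ↦ (1 - v) / (1 + c * v)` is an involution of `(0, 1)`. Substituting
`u = (1 - v) / (1 + c * v)` turns each of `u`, `1 - u`, `1 + c * u` and `|du/dv|` into a product of
powers of `1 - v`, `v`, `1 + c` and `1 + c * v`. When the exponents of `u`, `1 - u` and `1 + c * u`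
add up to `-2`, the powers of `1 + c * v` cancel and a multiple of Euler's beta integral is left.
-/

theorem integral_Ioo_rpow_mul_one_sub_rpow {a b : ℝ} (ha : 0 < a) (hb : 0 < b) :
    ∫ x in Ioo (0 : ℝ) 1, x ^ (a - 1) * (1 - x) ^ (b - 1) = Gamma a * Gamma b / Gamma (a + b) := by
  have betaIntegral_eq_ofReal : Complex.betaIntegral a b
      = ((∫ x in Ioo (0 : ℝ) 1, x ^ (a - 1) * (1 - x) ^ (b - 1) : ℝ) : ℂ) := by
    rw [Complex.betaIntegral, intervalIntegral.integral_of_le zero_le_one,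
      integral_Ioc_eq_integral_Ioo, ← integral_complex_ofReal]
    refine setIntegral_congr_fun measurableSet_Ioo fun x hx ↦ ?_
    have one_sub_nonneg : 0 ≤ 1 - x := sub_nonneg.2 hx.2.le
    push_cast [Complex.ofReal_cpow hx.1.le, Complex.ofReal_cpow one_sub_nonneg]
    rfl
  have beta_eq := ProbabilityTheory.beta_eq_betaIntegralReal a b ha hb
  rw [betaIntegral_eq_ofReal, Complex.ofReal_re] at beta_eq
  exact beta_eq.symm

/-- The Möbius transformation `x ↦ (1 - x) / (1 + c * x)`, which swaps `0` and `1` when `c ≠ -1`.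
It is the change of variables behind `stmt_8_general`, with `c = 1` in `stmt_8`. -/
noncomputable def mobiusSwap (c x : ℝ) : ℝ := (1 - x) / (1 + c * x)

section MobiusSwap

variable {c x : ℝ}

theorem one_add_mul_pos_of_mem_Ioo (hc : -1 < c) (hx : x ∈ Ioo (0 : ℝ) 1) : 0 < 1 + c * x :=
  calc
    0 < (1 - x) + (1 + c) * x := add_pos (sub_pos.2 hx.2) (mul_pos (by linarith) hx.1)
    _ = 1 + c * x := by ring

theorem one_sub_mobiusSwap (hx : 1 + c * x ≠ 0) :
    1 - mobiusSwap c x = (1 + c) * x / (1 + c * x) := by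
  rw [mobiusSwap, one_sub_div hx]
  ring

theorem one_add_mul_mobiusSwap (hx : 1 + c * x ≠ 0) :
    1 + c * mobiusSwap c x = (1 + c) / (1 + c * x) := by
  rw [mobiusSwap]
  field_simp
  ring

theorem mobiusSwap_mobiusSwap (hc : 1 + c ≠ 0) (hx : 1 + c * x ≠ 0) :
    mobiusSwap c (mobiusSwap c x) = x := by
  rw [mobiusSwap, one_sub_mobiusSwap hx, one_add_mul_mobiusSwap hx]
  field_simp

theorem mapsTo_mobiusSwap_Ioo (hc : -1 < c) :
    MapsTo (mobiusSwap c) (Ioo 0 1) (Ioo 0 1) := by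
  intro x hx
  have denom_pos := one_add_mul_pos_of_mem_Ioo hc hx
  refine ⟨div_pos (sub_pos.2 hx.2) denom_pos, sub_pos.1 ?_⟩
  rw [one_sub_mobiusSwap denom_pos.ne']
  exact div_pos (mul_pos (by linarith) hx.1) denom_pos

theorem bijOn_mobiusSwap_Ioo (hc : -1 < c) :
    BijOn (mobiusSwap c) (Ioo 0 1) (Ioo 0 1) := by
  have involutive : LeftInvOn (mobiusSwap c) (mobiusSwap c) (Ioo 0 1) := fun x hx ↦
    mobiusSwap_mobiusSwap (by linarith) (one_add_mul_pos_of_mem_Ioo hc hx).ne'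
  exact InvOn.bijOn ⟨involutive, involutive⟩ (mapsTo_mobiusSwap_Ioo hc) (mapsTo_mobiusSwap_Ioo hc)

theorem hasDerivAt_mobiusSwap (hx : 1 + c * x ≠ 0) :
    HasDerivAt (mobiusSwap c) (-((1 + c) / (1 + c * x) ^ 2)) x := by
  have numerator : HasDerivAt (fun y ↦ 1 - y) (-1) x := (hasDerivAt_id x).const_sub 1
  have denominator : HasDerivAt (fun y ↦ 1 + c * y) c x := by
    simpa only [mul_one, id] using ((hasDerivAt_id x).const_mul c).const_add 1
  convert! numerator.div denominator hx using 1
  ring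

theorem integral_Ioo_eq_integral_mobiusSwap {E : Type*} [NormedAddCommGroup E] [NormedSpace ℝ E]
    (hc : -1 < c) (f : ℝ → E) :
    ∫ u in Ioo (0 : ℝ) 1, f u
      = ∫ v in Ioo (0 : ℝ) 1, ((1 + c) / (1 + c * v) ^ 2) • f (mobiusSwap c v) := by
  have hasDeriv : ∀ v ∈ Ioo (0 : ℝ) 1,
      HasDerivWithinAt (mobiusSwap c) (-((1 + c) / (1 + c * v) ^ 2)) (Ioo 0 1) v := fun v hv ↦
    (hasDerivAt_mobiusSwap (one_add_mul_pos_of_mem_Ioo hc hv).ne').hasDerivWithinAt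
  have abs_deriv (v : ℝ) : |-((1 + c) / (1 + c * v) ^ 2)| = (1 + c) / (1 + c * v) ^ 2 := by
    rw [abs_neg, abs_of_nonneg (div_nonneg (by linarith) (sq_nonneg _))]
  have substitution := integral_image_eq_integral_abs_deriv_smul measurableSet_Ioo hasDeriv
    (bijOn_mobiusSwap_Ioo hc).injOn f
  simpa only [(bijOn_mobiusSwap_Ioo hc).image_eq, abs_deriv] using substitution

end MobiusSwap

theorem div_sq_mul_rpow_div_mul_rpow_div_mul_rpow_div {x y d t : ℝ} (hx : 0 ≤ x) (hy : 0 ≤ y)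
    (hd : 0 < d) (ht : 0 < t) (a b : ℝ) :
    d / t ^ 2 * ((y / t) ^ (b - 1) * (d * x / t) ^ (a - 1) * (d / t) ^ (-(a + b)))
      = d ^ (-b) * (x ^ (a - 1) * y ^ (b - 1)) := by
  have d_exponents : d * d ^ (a - 1) * d ^ (-(a + b)) = d ^ (-b) := by
    nth_rewrite 1 [← rpow_one d]
    rw [← rpow_add hd, ← rpow_add hd]
    ring_nf
  have t_exponents : t ^ 2 * t ^ (b - 1) * t ^ (a - 1) * t ^ (-(a + b)) = 1 := by
    rw [← rpow_two, ← rpow_add ht, ← rpow_add ht, ← rpow_add ht,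
      show 2 + (b - 1) + (a - 1) + -(a + b) = 0 by ring, rpow_zero]
  calc d / t ^ 2 * ((y / t) ^ (b - 1) * (d * x / t) ^ (a - 1) * (d / t) ^ (-(a + b)))
      = d * d ^ (a - 1) * d ^ (-(a + b)) * (x ^ (a - 1) * y ^ (b - 1))
          / (t ^ 2 * t ^ (b - 1) * t ^ (a - 1) * t ^ (-(a + b))) := by
        rw [div_rpow hy ht.le, div_rpow (mul_nonneg hd.le hx) ht.le, div_rpow hd.le ht.le,
          mul_rpow hd.le hx]
        ring
    _ = d ^ (-b) * (x ^ (a - 1) * y ^ (b - 1)) := by rw [d_exponents, t_exponents, div_one]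

theorem stmt_8_general {a b c : ℝ} (ha : 0 < a) (hb : 0 < b) (hc : -1 < c) :
    ∫ u in Ioo (0 : ℝ) 1, u ^ (b - 1) * (1 - u) ^ (a - 1) * (1 + c * u) ^ (-(a + b))
      = (1 + c) ^ (-b) * Gamma a * Gamma b / Gamma (a + b) := by
  have pullback : ∀ v ∈ Ioo (0 : ℝ) 1,
      ((1 + c) / (1 + c * v) ^ 2) • (mobiusSwap c v ^ (b - 1) * (1 - mobiusSwap c v) ^ (a - 1)
          * (1 + c * mobiusSwap c v) ^ (-(a + b)))
        = (1 + c) ^ (-b) * (v ^ (a - 1) * (1 - v) ^ (b - 1)) := fun v hv ↦ by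
    have denom_pos := one_add_mul_pos_of_mem_Ioo hc hv
    rw [one_sub_mobiusSwap denom_pos.ne', one_add_mul_mobiusSwap denom_pos.ne', smul_eq_mul]
    exact div_sq_mul_rpow_div_mul_rpow_div_mul_rpow_div hv.1.le (sub_nonneg.2 hv.2.le)
      (by linarith) denom_pos a b
  rw [integral_Ioo_eq_integral_mobiusSwap hc, setIntegral_congr_fun measurableSet_Ioo pullback,
    integral_const_mul, integral_Ioo_rpow_mul_one_sub_rpow ha hb]
  ring

theorem stmt_8 (α ρ : ℝ) (hα : α ∈ Ioo (0:ℝ) 1) (hρ : ρ ∈ Ioo (0:ℝ) 1) :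
    (∫ u in Ioo (0:ℝ) 1,
        u ^ (-α) * (1 - u) ^ (α * (1 - ρ) - 1) * (1 + u) ^ (α * ρ - 1))
      = 2 ^ (α - 1) * Real.Gamma (α * (1 - ρ)) * Real.Gamma (1 - α)
          / Real.Gamma (1 - α * ρ) := by
  convert stmt_8_general (a := α * (1 - ρ)) (b := 1 - α) (c := 1)
    (mul_pos hα.1 (sub_pos.2 hρ.2)) (sub_pos.2 hα.2) (by norm_num) using 4 <;> ring_nf
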